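/- Distinguished representations, solenoidal case (Lemma 'simpledistinguished'): in the setting of the boundary quadruple for solenoidal b, for every f ∈ D(∂_B^⊥) with key representation f = j g + U^{-1}(∂u) + w and z := ∂_B^⊥ f − U^{-1}(∂g) ∈ ker ∂^⊥, there exists a single constant c ∈ ℝ such that G₋f = (1/√2)·((g(q)+c+n_B(fb)(q))_{q∈B}, w − c·j(1) + z) and G₊f = (1/√2)·((g(q)+c−n_B(fb)(q))_{q∈B}, w − c·j(1) − z), both read as equalities in H̃± (i.e. the orthogonal projections P± in the definition of G₋f and G₊f are simultaneously realized by the shift by c). -/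

import Mathlib

open RealInnerProductSpace ContinuousMap

set_option synthInstance.maxHeartbeats 1000000
set_option maxHeartbeats 1000000

namespace Stmt12

variable {X : Type*} [MetricSpace X] [CompactSpace X]
variable {H : Type*} [NormedAddCommGroup H] [InnerProductSpace ℝ H] [CompleteSpace H]
variable {H₀ : Type*} [NormedAddCommGroup H₀] [InnerProductSpace ℝ H₀] [CompleteSpace H₀]
variable {ι : Type*} [Fintype ι]

/-- elements of `𝒞` vanishing on `B`, i.e. membership in `𝒞_B` -/
def Vanish (𝒞 : Subalgebra ℝ C(X, ℝ)) (B : Set X) (f : 𝒞) : Prop :=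
  ∀ x ∈ B, (f : C(X, ℝ)) x = 0

/-- `d` is the value of the adjoint `∂_B^*` at `v ∈ H` -/
def AdjRel (𝒞 : Subalgebra ℝ C(X, ℝ)) (B : Set X) (par : 𝒞 →ₗ[ℝ] H)
    (j : 𝒞 →ₗ[ℝ] H₀) (v : H) (d : H₀) : Prop :=
  ∀ φ : 𝒞, Vanish 𝒞 B φ → ⟪v, par φ⟫ = ⟪d, j φ⟫

/-- membership in `ker ∂^⊥` -/
def KerDperp (𝒞 : Subalgebra ℝ C(X, ℝ)) (par : 𝒞 →ₗ[ℝ] H) (U : H₀ ≃ₗᵢ[ℝ] H) (w : H₀) : Prop :=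
  ∀ φ : 𝒞, ⟪U w, par φ⟫ = 0

/-- a key representation of `f ∈ D(∂_B^⊥)` -/
def KeyRep (𝒞 : Subalgebra ℝ C(X, ℝ)) (B : Set X) (par : 𝒞 →ₗ[ℝ] H)
    (j : 𝒞 →ₗ[ℝ] H₀) (U : H₀ ≃ₗᵢ[ℝ] H) (f d : H₀) (g u : 𝒞) (w : H₀) : Prop :=
  AdjRel 𝒞 B par j (U f) d ∧
  (∃ e : H₀, AdjRel 𝒞 B par j (par u) e) ∧
  KerDperp 𝒞 par U w ∧
  f = j g + U.symm (par u) + w ∧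
  KerDperp 𝒞 par U (-d - U.symm (par g))

/-- the inner product of the boundary space `H̃± = ℝ^B ⊕ ker ∂^⊥` -/
noncomputable def ipTilde (p₁ p₂ : (ι → ℝ) × H₀) : ℝ :=
  (∑ i, p₁.1 i * p₂.1 i) + ⟪p₁.2, p₂.2⟫

/-- the orthogonal projection of `H̃±` onto the orthogonal complement `H±` of the span of `e` -/
noncomputable def projPerp (e x : (ι → ℝ) × H₀) : (ι → ℝ) × H₀ :=
  x - (ipTilde x e / ipTilde e e) • e

/-- the normal part `n_B(fb)` at the boundary point indexed by `i`, where `d = ∂_B^*(U f)` -/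
noncomputable def nfb (𝒞 : Subalgebra ℝ C(X, ℝ)) (par : 𝒞 →ₗ[ℝ] H) (j : 𝒞 →ₗ[ℝ] H₀)
    (U : H₀ ≃ₗᵢ[ℝ] H) (ψ : ι → 𝒞) (f d : H₀) (i : ι) : ℝ :=
  ⟪U f, par (ψ i)⟫ + ⟪-d, j (ψ i)⟫

/-- `G₋ f := (1/√2)·P±((g(q)+n_B(fb)(q))_q, w+z)` -/
noncomputable def Gminus (𝒞 : Subalgebra ℝ C(X, ℝ)) (par : 𝒞 →ₗ[ℝ] H) (j : 𝒞 →ₗ[ℝ] H₀)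
    (U : H₀ ≃ₗᵢ[ℝ] H) (q : ι → X) (ψ : ι → 𝒞) (f d : H₀) (g : 𝒞) (w : H₀) :
    (ι → ℝ) × H₀ :=
  (Real.sqrt 2)⁻¹ •
    projPerp (fun _ => (1 : ℝ), -(j 1))
      ((fun i => (g : C(X, ℝ)) (q i) + nfb 𝒞 par j U ψ f d i),
        w + (-d - U.symm (par g)))

/-- `G₊ f := (1/√2)·P±((g(q)−n_B(fb)(q))_q, w−z)` -/
noncomputable def Gplus (𝒞 : Subalgebra ℝ C(X, ℝ)) (par : 𝒞 →ₗ[ℝ] H) (j : 𝒞 →ₗ[ℝ] H₀)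
    (U : H₀ ≃ₗᵢ[ℝ] H) (q : ι → X) (ψ : ι → 𝒞) (f d : H₀) (g : 𝒞) (w : H₀) :
    (ι → ℝ) × H₀ :=
  (Real.sqrt 2)⁻¹ •
    projPerp (fun _ => (1 : ℝ), -(j 1))
      ((fun i => (g : C(X, ℝ)) (q i) - nfb 𝒞 par j U ψ f d i),
        w - (-d - U.symm (par g)))

/-!
Split the boundary data of `f` into a Dirichlet part `D = (g|_B, w)` and a Neumann part
`N = (n_B(fb), z)`, so that `G₋f` and `G₊f` are the normalised projections of `D + N` and `D - N`
onto the complement of `e = (𝟏_B, -j(1))`. Testing the adjoint relation with `1 - ∑ ψ_q ∈ 𝒞_B` and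
using `∂1 = 0` gives `∑ n_B(fb)(q) = -⟨d, j(1)⟩` for `d = ∂_B^*(U f)`, and `⟨z, j(1)⟩` has the same
value since `j(1) ∈ ker ∂^⊥`. Hence `N ⟂ e`: projecting leaves `±N` unchanged and shifts `D` by the
same multiple `c • e` in both cases.
-/

section Projection

variable {E₀ : Type*} [NormedAddCommGroup E₀] [InnerProductSpace ℝ E₀]

lemma ipTilde_add_left (x y e : (ι → ℝ) × E₀) :
    ipTilde (x + y) e = ipTilde x e + ipTilde y e := by
  simp only [ipTilde, Prod.fst_add, Prod.snd_add, Pi.add_apply, add_mul, Finset.sum_add_distrib,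
    inner_add_left]
  ring

lemma ipTilde_sub_left (x y e : (ι → ℝ) × E₀) :
    ipTilde (x - y) e = ipTilde x e - ipTilde y e :=
  eq_sub_of_add_eq <| by rw [← ipTilde_add_left, sub_add_cancel]

lemma projPerp_add_of_ipTilde_eq_zero {e y : (ι → ℝ) × E₀} (x : (ι → ℝ) × E₀)
    (hy : ipTilde y e = 0) : projPerp e (x + y) = projPerp e x + y := by
  rw [projPerp, projPerp, ipTilde_add_left, hy, add_zero, sub_add_eq_add_sub]

lemma projPerp_sub_of_ipTilde_eq_zero {e y : (ι → ℝ) × E₀} (x : (ι → ℝ) × E₀)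
    (hy : ipTilde y e = 0) : projPerp e (x - y) = projPerp e x - y := by
  rw [projPerp, projPerp, ipTilde_sub_left, hy, sub_zero, sub_right_comm]

lemma projPerp_eq_add_smul (e x : (ι → ℝ) × E₀) :
    projPerp e x = x + (-(ipTilde x e / ipTilde e e)) • e := by
  rw [projPerp, neg_smul, sub_eq_add_neg]

end Projection

section BoundaryData

variable {Y : Type*} [MetricSpace Y]
  {E : Type*} [NormedAddCommGroup E] [InnerProductSpace ℝ E]
  {E₀ : Type*} [NormedAddCommGroup E₀] [InnerProductSpace ℝ E₀]

variable {𝒞 : Subalgebra ℝ C(Y, ℝ)} {B : Set Y} {par : 𝒞 →ₗ[ℝ] E} {j : 𝒞 →ₗ[ℝ] E₀}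
  {U : E₀ ≃ₗᵢ[ℝ] E} {q : ι → Y} {ψ : ι → 𝒞} {f d w : E₀}

/-- The vector `(𝟏_B, -j(1))` of `H̃±` onto whose orthogonal complement `P±` projects. -/
def boundaryOne (ι : Type*) (j : 𝒞 →ₗ[ℝ] E₀) : (ι → ℝ) × E₀ :=
  (fun _ => 1, -(j 1))

/-- The Dirichlet part `((g(q))_q, w)` of the boundary data, common to `G₋f` and `G₊f`. -/
def dirichletPart (q : ι → Y) (g : 𝒞) (w : E₀) : (ι → ℝ) × E₀ :=
  (fun i => (g : C(Y, ℝ)) (q i), w)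

/-- The Neumann part `((n_B(fb)(q))_q, z)` of the boundary data, which enters `G₋f` and `G₊f` with
opposite signs; here `d = ∂_B^*(U f)`, so that `z = -d - U⁻¹(∂g)`. -/
noncomputable def neumannPart (par : 𝒞 →ₗ[ℝ] E) (j : 𝒞 →ₗ[ℝ] E₀) (U : E₀ ≃ₗᵢ[ℝ] E)
    (ψ : ι → 𝒞) (f d : E₀) (g : 𝒞) : (ι → ℝ) × E₀ :=
  (nfb 𝒞 par j U ψ f d, -d - U.symm (par g))

lemma Gminus_eq_projPerp_add (g : 𝒞) :
    Gminus 𝒞 par j U q ψ f d g w = (Real.sqrt 2)⁻¹ •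
      projPerp (boundaryOne ι j) (dirichletPart q g w + neumannPart par j U ψ f d g) :=
  rfl

lemma Gplus_eq_projPerp_sub (g : 𝒞) :
    Gplus 𝒞 par j U q ψ f d g w = (Real.sqrt 2)⁻¹ •
      projPerp (boundaryOne ι j) (dirichletPart q g w - neumannPart par j U ψ f d g) :=
  rfl

lemma dirichletPart_add_smul_boundaryOne {κ : Type*} (q : κ → Y) (g : 𝒞) (w : E₀) (c : ℝ) :
    dirichletPart q g w + c • boundaryOne κ j =
      (fun i => (g : C(Y, ℝ)) (q i) + c, w - c • j 1) := by
  ext i <;> simp [dirichletPart, boundaryOne, sub_eq_add_neg]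

lemma vanish_range_one_sub_sum (hψ1 : ∀ i, (ψ i : C(Y, ℝ)) (q i) = 1)
    (hψ0 : ∀ i i', i ≠ i' → (ψ i : C(Y, ℝ)) (q i') = 0) :
    Vanish 𝒞 (Set.range q) (1 - ∑ i, ψ i) := by
  rintro _ ⟨k, rfl⟩
  have hsum : ∑ i, (ψ i : C(Y, ℝ)) (q k) = 1 := by
    rw [Fintype.sum_eq_single k fun i hi => hψ0 i k hi, hψ1]
  simp [hsum]

lemma KerDperp.inner_symm_par_eq_zero (hw : KerDperp 𝒞 par U w) (g : 𝒞) :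
    ⟪U.symm (par g), w⟫ = 0 := by
  rw [← U.inner_map_map, U.apply_symm_apply, real_inner_comm]
  exact hw g

-- The right-hand side is `n_B(fb)(χ)`, which thus depends only on the values of `χ` on `B`.
lemma sum_nfb_eq (hd : AdjRel 𝒞 B par j (U f) d) {χ : 𝒞} (hχ : Vanish 𝒞 B (χ - ∑ i, ψ i)) :
    ∑ i, nfb 𝒞 par j U ψ f d i = ⟪U f, par χ⟫ - ⟪d, j χ⟫ := by
  have htest := hd _ hχ
  simp only [map_sub, map_sum, inner_sub_right, inner_sum] at htest
  simp only [nfb, inner_neg_left, Finset.sum_add_distrib, Finset.sum_neg_distrib]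
  linarith

lemma ipTilde_neumannPart_boundaryOne (hpar : par 1 = 0) (hjone : KerDperp 𝒞 par U (j 1))
    (hψ : Vanish 𝒞 B (1 - ∑ i, ψ i)) (hd : AdjRel 𝒞 B par j (U f) d) (g : 𝒞) :
    ipTilde (neumannPart par j U ψ f d g) (boundaryOne ι j) = 0 := by
  have hN : ∑ i, nfb 𝒞 par j U ψ f d i = -⟪d, j 1⟫ := by
    rw [sum_nfb_eq hd hψ, hpar, inner_zero_right, zero_sub]
  have hz : ⟪-d - U.symm (par g), j 1⟫ = -⟪d, j 1⟫ := by
    rw [inner_sub_left, inner_neg_left, hjone.inner_symm_par_eq_zero, sub_zero]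
  simp only [ipTilde, neumannPart, boundaryOne, mul_one, inner_neg_right, hN, hz]
  ring

theorem stmt_12_general
    (𝒞 : Subalgebra ℝ C(Y, ℝ)) (par : 𝒞 →ₗ[ℝ] E) (hpar : par 1 = 0) (B : Set Y)
    (j : 𝒞 →ₗ[ℝ] E₀) (U : E₀ ≃ₗᵢ[ℝ] E) (hjone : KerDperp 𝒞 par U (j 1))
    (q : ι → Y) (ψ : ι → 𝒞) (hψ : Vanish 𝒞 B (1 - ∑ i, ψ i))
    (f d : E₀) (hd : AdjRel 𝒞 B par j (U f) d) (g : 𝒞) (w : E₀) :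
    ∃ c : ℝ,
      Gminus 𝒞 par j U q ψ f d g w =
        (Real.sqrt 2)⁻¹ •
          (((fun i => (g : C(Y, ℝ)) (q i) + c + nfb 𝒞 par j U ψ f d i),
            w - c • j 1 + (-d - U.symm (par g))) : (ι → ℝ) × E₀) ∧
      Gplus 𝒞 par j U q ψ f d g w =
        (Real.sqrt 2)⁻¹ •
          (((fun i => (g : C(Y, ℝ)) (q i) + c - nfb 𝒞 par j U ψ f d i),
            w - c • j 1 - (-d - U.symm (par g))) : (ι → ℝ) × E₀) := by
  have hN := ipTilde_neumannPart_boundaryOne hpar hjone hψ hd g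
  refine ⟨-(ipTilde (dirichletPart q g w) (boundaryOne ι j) /
    ipTilde (boundaryOne ι j) (boundaryOne ι j)), ?_, ?_⟩
  · rw [Gminus_eq_projPerp_add, projPerp_add_of_ipTilde_eq_zero _ hN, projPerp_eq_add_smul,
      dirichletPart_add_smul_boundaryOne]
    rfl
  · rw [Gplus_eq_projPerp_sub, projPerp_sub_of_ipTilde_eq_zero _ hN, projPerp_eq_add_smul,
      dirichletPart_add_smul_boundaryOne]
    rfl

end BoundaryData

/-- **Distinguished representations, solenoidal case** (Lemma `simpledistinguished`): for every
`f ∈ D(∂_B^⊥)` with key representation `(d, g, u, w)` and `z := −d − U⁻¹(∂g)`, there is a single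
constant `c ∈ ℝ` realizing both orthogonal projections:
`G₋f = (1/√2)((g(q)+c+n_B(fb)(q))_q, w − c·j(1) + z)` and
`G₊f = (1/√2)((g(q)+c−n_B(fb)(q))_q, w − c·j(1) − z)`, as equalities in `H̃±`. -/
theorem stmt_12
    (𝒞 : Subalgebra ℝ C(X, ℝ))
    (act : 𝒞 →ₗ[ℝ] H →ₗ[ℝ] H)
    (hact_one : ∀ v : H, act 1 v = v)
    (hact_symm : ∀ (f : 𝒞) (v w : H), ⟪act f v, w⟫ = ⟪v, act f w⟫)
    (hact_bound : ∀ (f : 𝒞) (v : H), ‖act f v‖ ≤ ‖(f : C(X, ℝ))‖ * ‖v‖)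
    (par : 𝒞 →ₗ[ℝ] H)
    (hLeibniz : ∀ f g : 𝒞, par (f * g) = act f (par g) + act g (par f))
    (B : Set X) (hB : IsClosed B)
    (b : H) (hbne : b ≠ 0)
    (hsol : ∀ φ : 𝒞, ⟪b, par φ⟫ = 0)
    (j : 𝒞 →ₗ[ℝ] H₀) (hjinj : Function.Injective j)
    (hjdense : Dense (⇑j '' {f : 𝒞 | Vanish 𝒞 B f}))
    (U : H₀ ≃ₗᵢ[ℝ] H) (hU : ∀ f : 𝒞, U (j f) = act f b)
    -- resistance-space laws
    (hconst : ∀ f : 𝒞, par f = 0 ↔ ∃ cst : ℝ, ∀ x : X, (f : C(X, ℝ)) x = cst)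
    (hclosedrange : IsClosed ((LinearMap.range par : Submodule ℝ H) : Set H))
    -- finite boundary data
    (q : ι → X) (hqinj : Function.Injective q) (hBq : B = Set.range q)
    (ψ : ι → 𝒞)
    (hψ1 : ∀ i, (ψ i : C(X, ℝ)) (q i) = 1)
    (hψ0 : ∀ i i', i ≠ i' → (ψ i : C(X, ℝ)) (q i') = 0)
    (hψharm : ∀ i, ∀ φ : 𝒞, Vanish 𝒞 B φ → ⟪par (ψ i), par φ⟫ = 0)
    -- since `b` is solenoidal, `j(1) ∈ ker ∂^⊥`
    (hjone : KerDperp 𝒞 par U (j 1)) :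
    ∀ (f d : H₀) (g u : 𝒞) (w : H₀),
      KeyRep 𝒞 B par j U f d g u w →
      ∃ c : ℝ,
        Gminus 𝒞 par j U q ψ f d g w =
          (Real.sqrt 2)⁻¹ •
            (((fun i => (g : C(X, ℝ)) (q i) + c + nfb 𝒞 par j U ψ f d i),
              w - c • j 1 + (-d - U.symm (par g))) : (ι → ℝ) × H₀) ∧
        Gplus 𝒞 par j U q ψ f d g w =
          (Real.sqrt 2)⁻¹ •
            (((fun i => (g : C(X, ℝ)) (q i) + c - nfb 𝒞 par j U ψ f d i),
              w - c • j 1 - (-d - U.symm (par g))) : (ι → ℝ) × H₀) :=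
  fun f d g _ w hK => stmt_12_general 𝒞 par ((hconst 1).2 ⟨1, fun _ => rfl⟩) B j U hjone q ψ
    (hBq ▸ vanish_range_one_sub_sum hψ1 hψ0) f d hK.1 g w

end Stmt12
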